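/- Let b > 1 and β ∈ (0, 1/2), and let s ∈ (2, 3 − 2β). Then the expectation over (Θ, Λ), with respect to the infinite product of uniform measures on [0,1], of the s-energy I_s(μ_{Θ,Λ}) = ∫₀¹∫₀¹ ((x − y)² + |f_{Θ,Λ}(x) − f_{Θ,Λ}(y)|²)^{−s/2} dx dy is finite; that is, ∫∫ I_s(μ_{Θ,Λ}) dΘ dΛ < ∞. -/

import Mathlib

open MeasureTheory

/-- First coordinate of the random vector-valued Weierstrass function
`t ↦ ∑ b^{-βn} cos(2π(bⁿ t + θₙ))`. -/
noncomputable def W1 (b β : ℝ) (Θ : ℕ → ℝ) (t : ℝ) : ℝ :=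
  ∑' n : ℕ, b ^ (-β * (n : ℝ)) * Real.cos (2 * Real.pi * (b ^ n * t + Θ n))

/-- Second coordinate of the random vector-valued Weierstrass function
`t ↦ ∑ b^{-βn} sin(2π(bⁿ t + λₙ))`. -/
noncomputable def W2 (b β : ℝ) (Λ : ℕ → ℝ) (t : ℝ) : ℝ :=
  ∑' n : ℕ, b ^ (-β * (n : ℝ)) * Real.sin (2 * Real.pi * (b ^ n * t + Λ n))

/-- Euclidean distance `|f_{Θ,Λ}(x) - f_{Θ,Λ}(y)|` in ℝ². -/
noncomputable def Wdist (b β : ℝ) (Θ Λ : ℕ → ℝ) (x y : ℝ) : ℝ :=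
  Real.sqrt ((W1 b β Θ x - W1 b β Θ y) ^ 2 + (W2 b β Λ x - W2 b β Λ y) ^ 2)

/-- The graph `G(f_{Θ,Λ}) = {(t, f_{Θ,Λ}(t)) : t ∈ [0,1]}` inside ℝ³ = ℝ × ℝ². -/
def Wgraph (b β : ℝ) (Θ Λ : ℕ → ℝ) : Set (ℝ × ℝ × ℝ) :=
  {p | ∃ t ∈ Set.Icc (0 : ℝ) 1, p = (t, W1 b β Θ t, W2 b β Λ t)}

/-- `μ` is the infinite product over `ℕ` of the uniform probability measures on `[0,1]`:
the measure of every measurable cylinder is the corresponding finite product of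
uniform measures. -/
def IsUniformProductMeasure (μ : Measure (ℕ → ℝ)) : Prop :=
  ∀ (t : Finset ℕ) (s : ℕ → Set ℝ), (∀ i, MeasurableSet (s i)) →
    μ {f : ℕ → ℝ | ∀ i ∈ t, f i ∈ s i} =
      ∏ i ∈ t, (volume.restrict (Set.Icc (0 : ℝ) 1)) (s i)

/-!
The Riesz kernel at `(h, u, v)` is at most `(h² + u²) ^ (-s/4) * (h² + v²) ^ (-s/4)`, and `Θ`, `Λ`
are independent, so the two coordinates of `f_{Θ,Λ}` can be treated separately. The increment of
one coordinate over a displacement `h = x - y` is a sine series in independent uniform phases. At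
the scale `bⁿ|h| ≈ 1` three consecutive terms have amplitude at least a constant times `|h| ^ β`.
Each `sin (2πα)` has the arcsine density, which lies in `L^{3/2}`, so by Young's inequality the sum
of these three terms, and hence the increment, has a density bounded by a constant times
`|h| ^ (-β)`. As `∫ (h² + u²) ^ (-s/4) du` is proportional to `|h| ^ (1 - s/2)` for `s > 2`, the
expected kernel is at most a constant times `|h| ^ (2 - s - 2β)`, which is integrable over the unit
square when `s < 3 - 2β`.
-/

open Set ENNReal
open scoped NNReal

section Lebesgue

lemma lintegral_comp_const_add_mul (g : ℝ → ℝ≥0∞) (a : ℝ) {q : ℝ} (hq : q ≠ 0) :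
    ∫⁻ w, g (a + q * w) = ENNReal.ofReal |q⁻¹| * ∫⁻ u, g u := by
  calc ∫⁻ w, g (a + q * w)
      = ∫⁻ u, g (a + u) ∂(Measure.map (Homeomorph.mulLeft₀ q hq).toMeasurableEquiv volume) :=
        (lintegral_map_equiv (fun u ↦ g (a + u)) (Homeomorph.mulLeft₀ q hq).toMeasurableEquiv).symm
    _ = ∫⁻ u, g (a + u) ∂(ENNReal.ofReal |q⁻¹| • volume) := by
        rw [← Real.map_volume_mul_left hq]; rfl
    _ = ENNReal.ofReal |q⁻¹| * ∫⁻ u, g u := by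
        rw [lintegral_smul_measure, lintegral_add_left_eq_self, smul_eq_mul]

lemma setLIntegral_Icc_comp_sub_left (f : ℝ → ℝ≥0∞) (a c d : ℝ) :
    ∫⁻ y in Icc c d, f (a - y) = ∫⁻ t in Icc (a - d) (a - c), f t := by
  have h := (Measure.measurePreserving_sub_left volume a).setLIntegral_comp_preimage_emb
    (MeasurableEquiv.subLeft a).measurableEmbedding f (Icc (a - d) (a - c))
  simpa using h

lemma setLIntegral_Ioc_eq_of_periodic {f : ℝ → ℝ≥0∞} {T : ℝ} (hf : f.Periodic T) (hT : 0 < T)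
    (a b : ℝ) : ∫⁻ x in Ioc a (a + T), f x = ∫⁻ x in Ioc b (b + T), f x := by
  have : Fact (0 < T) := ⟨hT⟩
  exact (AddCircle.lintegral_preimage T a hf.lift).trans
    (AddCircle.lintegral_preimage T b hf.lift).symm

lemma setLIntegral_Icc_abs_rpow_lt_top {γ : ℝ} (hγ : -1 < γ) (c d : ℝ) :
    ∫⁻ t in Icc c d, ENNReal.ofReal (|t| ^ γ) < ∞ := by
  have hloc : LocallyIntegrable (fun t : ℝ ↦ |t| ^ γ) :=
    locallyIntegrable_of_norm_le_rpow (C := 1) (α := -γ) (by simp) (by simp; linarith)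
      (.of_forall fun t ↦ by simp [abs_of_nonneg (Real.rpow_nonneg (abs_nonneg t) γ)])
      (Measurable.aestronglyMeasurable (by fun_prop))
  exact (hloc.integrableOn_isCompact isCompact_Icc).lintegral_lt_top

lemma lintegral_lintegral_abs_sub_rpow_lt_top {γ : ℝ} (hγ : -1 < γ) :
    ∫⁻ x in Icc (0 : ℝ) 1, ∫⁻ y in Icc (0 : ℝ) 1, ENNReal.ofReal (|x - y| ^ γ) < ∞ := by
  have hinner : ∀ x ∈ Icc (0 : ℝ) 1, ∫⁻ y in Icc (0 : ℝ) 1, ENNReal.ofReal (|x - y| ^ γ)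
      ≤ ∫⁻ t in Icc (-1 : ℝ) 1, ENNReal.ofReal (|t| ^ γ) := fun x hx ↦ by
    rw [setLIntegral_Icc_comp_sub_left fun t ↦ ENNReal.ofReal (|t| ^ γ)]
    exact lintegral_mono_set (Icc_subset_Icc (by linarith [hx.1]) (by linarith [hx.2]))
  calc _ ≤ ∫⁻ _ in Icc (0 : ℝ) 1, ∫⁻ t in Icc (-1 : ℝ) 1, ENNReal.ofReal (|t| ^ γ) :=
        setLIntegral_mono measurable_const hinner
    _ < ∞ := by simpa using setLIntegral_Icc_abs_rpow_lt_top hγ (-1) 1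

end Lebesgue

section Arcsine

/-- The density of the arcsine law on `(-1, 1)`, the law of `sin (2πα)` for `α` uniform on `[0, 1]`.
It vanishes outside `(-1, 1)` because there `√(1 - u ^ 2) = 0` and `0⁻¹ = 0`. -/
noncomputable def arcsineDensity (u : ℝ) : ℝ≥0∞ := ENNReal.ofReal (Real.pi * √(1 - u ^ 2))⁻¹

@[fun_prop]
lemma measurable_arcsineDensity : Measurable arcsineDensity := by
  unfold arcsineDensity; fun_prop

lemma arcsineDensity_eq_zero {u : ℝ} (hu : u ∉ Ioo (-1 : ℝ) 1) : arcsineDensity u = 0 := by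
  have : 1 - u ^ 2 ≤ 0 := by
    by_contra! h
    exact hu (abs_lt.1 ((sq_lt_one_iff_abs_lt_one u).1 (by linarith)))
  simp [arcsineDensity, Real.sqrt_eq_zero_of_nonpos this]

lemma arcsineDensity_sin {θ : ℝ} (hθ : 0 ≤ Real.cos θ) :
    arcsineDensity (Real.sin θ) = ENNReal.ofReal (Real.pi * Real.cos θ)⁻¹ := by
  rw [arcsineDensity, ← Real.cos_sq', Real.sqrt_sq hθ]

lemma arcsineDensity_rpow_le {q u w : ℝ} (hq : 0 ≤ q) (hw : 0 < w) (hwu : w ≤ 1 - u ^ 2) :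
    arcsineDensity u ^ q ≤ ENNReal.ofReal (w ^ (-(q / 2))) := by
  have hpos : 0 < √w := Real.sqrt_pos.2 hw
  have hle : √w ≤ Real.pi * √(1 - u ^ 2) :=
    (Real.sqrt_le_sqrt hwu).trans
      (le_mul_of_one_le_left (Real.sqrt_nonneg _) (by linarith [Real.pi_gt_three]))
  calc arcsineDensity u ^ q ≤ ENNReal.ofReal (√w)⁻¹ ^ q := by
        unfold arcsineDensity; gcongr
    _ = ENNReal.ofReal (w ^ (-(q / 2))) := by
        rw [ENNReal.ofReal_rpow_of_pos (inv_pos.2 hpos), Real.sqrt_eq_rpow, ← Real.rpow_neg hw.le,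
          ← Real.rpow_mul hw.le]
        ring_nf

lemma arcsineDensity_rpow_le_indicator {q : ℝ} (hq : 0 < q) (u : ℝ) :
    arcsineDensity u ^ q ≤ (Icc (-1 : ℝ) 1).indicator (fun u ↦
      ENNReal.ofReal (|1 - u| ^ (-(q / 2))) + ENNReal.ofReal (|-1 - u| ^ (-(q / 2)))) u := by
  by_cases hu : u ∈ Ioo (-1 : ℝ) 1
  · obtain ⟨hu₁, hu₂⟩ := id hu
    rw [indicator_of_mem (Ioo_subset_Icc_self hu), abs_of_pos (by linarith : 0 < 1 - u),
      abs_of_neg (by linarith : -1 - u < 0)]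
    rcases le_total 0 u with h | h
    · exact (arcsineDensity_rpow_le hq.le (by linarith) (by nlinarith)).trans le_self_add
    · exact (arcsineDensity_rpow_le hq.le (by linarith) (by nlinarith)).trans le_add_self
  · simp [arcsineDensity_eq_zero hu, hq]

lemma lintegral_arcsineDensity_rpow_lt_top {q : ℝ} (hq : 0 < q) (hq' : q < 2) :
    ∫⁻ u, arcsineDensity u ^ q < ∞ := by
  have hend (a : ℝ) : ∫⁻ u in Icc (-1 : ℝ) 1, ENNReal.ofReal (|a - u| ^ (-(q / 2))) < ∞ := by
    rw [setLIntegral_Icc_comp_sub_left fun t ↦ ENNReal.ofReal (|t| ^ (-(q / 2)))]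
    exact setLIntegral_Icc_abs_rpow_lt_top (by linarith) _ _
  refine (lintegral_mono (arcsineDensity_rpow_le_indicator hq)).trans_lt ?_
  rw [lintegral_indicator measurableSet_Icc, lintegral_add_left (by fun_prop)]
  exact ENNReal.add_lt_top.2 ⟨hend 1, hend (-1)⟩

lemma image_sin_two_pi_mul_Ioo :
    (fun α ↦ Real.sin (2 * Real.pi * α)) '' Ioo (-(1 / 4)) (1 / 4) = Ioo (-1) 1 := by
  have hpi := Real.pi_pos
  ext u
  constructor
  · rintro ⟨α, hα, rfl⟩
    have hcos : 0 < Real.cos (2 * Real.pi * α) :=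
      Real.cos_pos_of_mem_Ioo ⟨by nlinarith [hα.1], by nlinarith [hα.2]⟩
    have hsq := Real.sin_sq_add_cos_sq (2 * Real.pi * α)
    exact abs_lt.1 ((sq_lt_one_iff_abs_lt_one _).1 (by nlinarith))
  · rintro ⟨hu₁, hu₂⟩
    have hlo := Real.neg_pi_div_two_lt_arcsin.2 hu₁
    have hhi := Real.arcsin_lt_pi_div_two.2 hu₂
    refine ⟨Real.arcsin u / (2 * Real.pi), ⟨?_, ?_⟩, ?_⟩
    · rw [lt_div_iff₀ (by positivity)]; linarith
    · rw [div_lt_iff₀ (by positivity)]; linarith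
    · dsimp only
      rw [mul_div_cancel₀ _ (by positivity), Real.sin_arcsin hu₁.le hu₂.le]

lemma lintegral_arcsineDensity_mul (φ : ℝ → ℝ≥0∞) :
    ∫⁻ u, arcsineDensity u * φ u
      = 2 * ∫⁻ α in Icc (-(1 / 4) : ℝ) (1 / 4), φ (Real.sin (2 * Real.pi * α)) := by
  have hpi := Real.pi_pos
  have hderiv (α : ℝ) : HasDerivAt (fun α ↦ Real.sin (2 * Real.pi * α))
      (Real.cos (2 * Real.pi * α) * (2 * Real.pi)) α := by
    simpa using ((hasDerivAt_id α).const_mul (2 * Real.pi)).sin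
  have hinj : InjOn (fun α ↦ Real.sin (2 * Real.pi * α)) (Ioo (-(1 / 4)) (1 / 4)) := by
    intro α hα α' hα' h
    have := Real.injOn_sin (x₁ := 2 * Real.pi * α) (x₂ := 2 * Real.pi * α')
      ⟨by nlinarith [hα.1], by nlinarith [hα.2]⟩ ⟨by nlinarith [hα'.1], by nlinarith [hα'.2]⟩ h
    simpa [hpi.ne'] using this
  have hsupp : (fun u ↦ arcsineDensity u * φ u).support ⊆ Ioo (-1 : ℝ) 1 := fun u hu ↦ by
    by_contra h
    simp [arcsineDensity_eq_zero h] at hu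
  have hjac : ∀ α ∈ Ioo (-(1 / 4) : ℝ) (1 / 4),
      ENNReal.ofReal |Real.cos (2 * Real.pi * α) * (2 * Real.pi)| *
        (arcsineDensity (Real.sin (2 * Real.pi * α)) * φ (Real.sin (2 * Real.pi * α)))
      = 2 * φ (Real.sin (2 * Real.pi * α)) := fun α hα ↦ by
    have hcos : 0 < Real.cos (2 * Real.pi * α) :=
      Real.cos_pos_of_mem_Ioo ⟨by nlinarith [hα.1], by nlinarith [hα.2]⟩
    rw [arcsineDensity_sin hcos.le, ← mul_assoc, ← ENNReal.ofReal_mul (abs_nonneg _),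
      abs_of_pos (by positivity), ← ENNReal.ofReal_ofNat]
    congr 2
    field_simp
  rw [← setLIntegral_eq_of_support_subset hsupp, ← image_sin_two_pi_mul_Ioo,
    lintegral_image_eq_lintegral_abs_deriv_mul measurableSet_Ioo
      (fun α _ ↦ (hderiv α).hasDerivWithinAt) hinj,
    setLIntegral_congr_fun measurableSet_Ioo hjac, lintegral_const_mul' _ _ (by simp),
    setLIntegral_congr Ioo_ae_eq_Icc]

lemma lintegral_comp_sin_two_pi_mul (φ : ℝ → ℝ≥0∞) (r : ℝ) :
    ∫⁻ α in Icc (0 : ℝ) 1, φ (Real.sin (2 * Real.pi * (α + r)))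
      = ∫⁻ u, arcsineDensity u * φ u := by
  set f : ℝ → ℝ≥0∞ := fun α ↦ φ (Real.sin (2 * Real.pi * α)) with hf
  have hper : f.Periodic 1 := fun α ↦ by
    simp only [hf, mul_add, mul_one, Real.sin_add_two_pi]
  have hrefl (α : ℝ) : f (1 / 2 - α) = f α := by
    simp only [hf]
    rw [show 2 * Real.pi * (1 / 2 - α) = Real.pi - 2 * Real.pi * α by ring, Real.sin_pi_sub]
  calc ∫⁻ α in Icc (0 : ℝ) 1, f (α + r)
      = ∫⁻ α in Ioc r (r + 1), f α := by
        have h := (measurePreserving_add_right volume r).setLIntegral_comp_preimage_emb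
          (MeasurableEquiv.addRight r).measurableEmbedding f (Icc r (r + 1))
        rw [setLIntegral_congr Ioc_ae_eq_Icc, ← h]
        simp
    _ = ∫⁻ α in Ioc (-(1 / 4)) (-(1 / 4) + 1), f α :=
        setLIntegral_Ioc_eq_of_periodic hper one_pos _ _
    _ = (∫⁻ α in Icc (-(1 / 4)) (1 / 4), f α) + ∫⁻ α in Icc (1 / 4) (3 / 4), f α := by
        rw [show (-(1 / 4) + 1 : ℝ) = 3 / 4 by norm_num,
          ← Ioc_union_Ioc_eq_Ioc (b := (1 / 4 : ℝ)) (by norm_num) (by norm_num),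
          lintegral_union measurableSet_Ioc (Ioc_disjoint_Ioc_of_le le_rfl),
          setLIntegral_congr Ioc_ae_eq_Icc, setLIntegral_congr Ioc_ae_eq_Icc]
    _ = 2 * ∫⁻ α in Icc (-(1 / 4)) (1 / 4), f α := by
        have h := setLIntegral_Icc_comp_sub_left f (1 / 2) (-(1 / 4)) (1 / 4)
        simp only [hrefl] at h
        rw [two_mul, h]
        norm_num
    _ = _ := (lintegral_arcsineDensity_mul φ).symm

end Arcsine

section Smoothing

lemma mul_mul_le_rpow_add_rpow_add_rpow (x y z : ℝ≥0∞) :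
    x * y * z ≤ (x * y) ^ (3 / 2 : ℝ) + (x * z) ^ (3 / 2 : ℝ) + (y * z) ^ (3 / 2 : ℝ) := by
  set m := max (x * y) (max (x * z) (y * z)) with hm
  calc x * y * z = ((x * y) * (x * z) * (y * z)) ^ (2⁻¹ : ℝ) := by
        rw [show (x * y) * (x * z) * (y * z) = (x * y * z) ^ (2 : ℝ) by
          rw [ENNReal.rpow_two]; ring, ← ENNReal.rpow_mul]
        norm_num
    _ ≤ (m * m * m) ^ (2⁻¹ : ℝ) := by gcongr <;> simp [hm]
    _ = m ^ (3 / 2 : ℝ) := by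
        rw [show m * m * m = m ^ (3 : ℝ) by rw [← Nat.cast_ofNat, ENNReal.rpow_natCast]; ring,
          ← ENNReal.rpow_mul]
        norm_num
    _ ≤ _ := by
        have hmem : m = x * y ∨ m = x * z ∨ m = y * z := by grind
        rcases hmem with h | h | h <;> rw [h]
        · rw [add_assoc]; exact le_self_add
        · exact le_add_self.trans le_self_add
        · exact le_add_self

variable {φ p g : ℝ → ℝ≥0∞}

lemma lintegral_mul_mul_comp_affine (hφ : Measurable φ) (hg : Measurable g) (c q₁ q₂ : ℝ) {q₃ : ℝ}
    (hq₃ : q₃ ≠ 0) :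
    ∫⁻ u, ∫⁻ v, ∫⁻ w, φ u * φ v * g (c + q₁ * u + q₂ * v + q₃ * w)
      = ENNReal.ofReal |q₃⁻¹| * (∫⁻ u, φ u) ^ 2 * ∫⁻ u, g u := by
  simp (disch := fun_prop) only [lintegral_const_mul, lintegral_mul_const,
    lintegral_comp_const_add_mul g _ hq₃]
  ring

/- Young's inequality `L^{3/2} * L^{3/2} * L^{3/2} ⊆ L^∞` for the density of
`q₁ U + q₂ V + q₃ W`, with `U`, `V`, `W` independent of density `p`. -/
lemma lintegral_mul_comp_affine_le (hp : Measurable p) (hg : Measurable g) {δ : ℝ} (hδ : 0 < δ)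
    (c : ℝ) {q₁ q₂ q₃ : ℝ} (hq₁ : δ ≤ |q₁|) (hq₂ : δ ≤ |q₂|) (hq₃ : δ ≤ |q₃|) :
    ∫⁻ u, p u * ∫⁻ v, p v * ∫⁻ w, p w * g (c + q₁ * u + q₂ * v + q₃ * w)
      ≤ 3 * ENNReal.ofReal δ⁻¹ * (∫⁻ u, p u ^ (3 / 2 : ℝ)) ^ 2 * ∫⁻ u, g u := by
  set P : ℝ → ℝ≥0∞ := fun u ↦ p u ^ (3 / 2 : ℝ)
  set G : ℝ → ℝ → ℝ → ℝ≥0∞ := fun u v w ↦ g (c + q₁ * u + q₂ * v + q₃ * w)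
  set R : ℝ≥0∞ := ENNReal.ofReal δ⁻¹ * (∫⁻ u, P u) ^ 2 * ∫⁻ u, g u
  have hP : Measurable P := by fun_prop
  have hpair (a₁ a₂ : ℝ) {a₃ : ℝ} (ha₃ : δ ≤ |a₃|) :
      ∫⁻ u, ∫⁻ v, ∫⁻ w, P u * P v * g (c + a₁ * u + a₂ * v + a₃ * w) ≤ R := by
    rw [lintegral_mul_mul_comp_affine hP hg _ _ _ (abs_pos.1 (hδ.trans_le ha₃)), abs_inv]
    unfold R; gcongr
  have hpoint (u v w : ℝ) : p u * (p v * (p w * G u v w))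
      ≤ P u * P v * G u v w + P u * P w * G u v w + P v * P w * G u v w := by
    have h := mul_mul_le_rpow_add_rpow_add_rpow (p u) (p v) (p w)
    simp only [ENNReal.mul_rpow_of_nonneg _ _ (by norm_num : (0 : ℝ) ≤ 3 / 2)] at h
    calc p u * (p v * (p w * G u v w)) = p u * p v * p w * G u v w := by ring
      _ ≤ (P u * P v + P u * P w + P v * P w) * G u v w := by gcongr
      _ = _ := by ring
  have h₁₃ : ∫⁻ u, ∫⁻ v, ∫⁻ w, P u * P w * G u v w ≤ R := by
    refine le_of_eq_of_le (lintegral_congr fun u ↦ ?_) (hpair q₁ q₃ hq₂)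
    rw [lintegral_lintegral_swap (by fun_prop)]
    simp only [G, add_right_comm _ (q₂ * _)]
  have h₂₃ : ∫⁻ u, ∫⁻ v, ∫⁻ w, P v * P w * G u v w ≤ R := by
    refine le_of_eq_of_le ?_ (hpair q₂ q₃ hq₁)
    rw [lintegral_lintegral_swap (by fun_prop)]
    refine lintegral_congr fun v ↦ ?_
    rw [lintegral_lintegral_swap (by fun_prop)]
    simp only [G, add_right_comm _ (q₁ * _)]
  calc ∫⁻ u, p u * ∫⁻ v, p v * ∫⁻ w, p w * G u v w
      = ∫⁻ u, ∫⁻ v, ∫⁻ w, p u * (p v * (p w * G u v w)) := by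
        simp (disch := with_unfolding_all fun_prop) only [G, lintegral_const_mul]
    _ ≤ ∫⁻ u, ∫⁻ v, ∫⁻ w,
          (P u * P v * G u v w + P u * P w * G u v w + P v * P w * G u v w) := by
        gcongr with u v w; exact hpoint u v w
    _ = (∫⁻ u, ∫⁻ v, ∫⁻ w, P u * P v * G u v w) + (∫⁻ u, ∫⁻ v, ∫⁻ w, P u * P w * G u v w)
          + ∫⁻ u, ∫⁻ v, ∫⁻ w, P v * P w * G u v w := by
        simp (disch := with_unfolding_all fun_prop) only [G, lintegral_add_left]
    _ ≤ R + R + R := by gcongr; exact hpair q₁ q₂ hq₃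
    _ = 3 * ENNReal.ofReal δ⁻¹ * (∫⁻ u, P u) ^ 2 * ∫⁻ u, g u := by ring

end Smoothing

section InfiniteProduct

variable {ι : Type*} [DecidableEq ι] {X : ι → Type*} [∀ i, MeasurableSpace (X i)]
  (P : ∀ i, Measure (X i)) [∀ i, IsProbabilityMeasure (P i)]

lemma measurePreserving_updateFinset_infinitePi (s : Finset ι) :
    MeasurePreserving (fun p : (∀ i, X i) × (∀ i : s, X i) ↦ Function.updateFinset p.1 s p.2)
      ((Measure.infinitePi P).prod (Measure.pi fun i : s ↦ P i)) (Measure.infinitePi P) where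
  measurable := by fun_prop
  map_eq := by
    refine Measure.eq_infinitePi P fun t u hu ↦ ?_
    have hpre : (fun p : (∀ i, X i) × (∀ i : s, X i) ↦ Function.updateFinset p.1 s p.2) ⁻¹'
          Set.pi t u
        = Set.pi ↑(t \ s) u ×ˢ Set.pi univ fun i : s ↦ if ↑i ∈ t then u i else univ := by
      ext ⟨x, y⟩
      simp only [mem_preimage, mem_prod, mem_pi, Function.updateFinset]
      grind
    rw [Measure.map_apply (by fun_prop) (.pi t.countable_toSet fun i _ ↦ hu i), hpre,
      Measure.prod_prod, Measure.infinitePi_pi _ fun i _ ↦ hu i, Measure.pi_pi]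
    simp only [apply_ite, measure_univ]
    rw [Finset.prod_coe_sort s fun i ↦ if i ∈ t then P i (u i) else 1, Finset.prod_ite_mem,
      Finset.inter_comm, mul_comm, Finset.prod_inter_mul_prod_sdiff]

lemma lintegral_lmarginal_infinitePi (s : Finset ι) {F : (∀ i, X i) → ℝ≥0∞} (hF : Measurable F) :
    ∫⁻ x, (∫⋯∫⁻_s, F ∂P) x ∂Measure.infinitePi P = ∫⁻ x, F x ∂Measure.infinitePi P := by
  have h := measurePreserving_updateFinset_infinitePi P s
  rw [← h.lintegral_comp hF, lintegral_prod _ (by fun_prop)]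
  rfl

end InfiniteProduct

/-- The uniform probability measure on `[0, 1]`, as a measure on the line. -/
noncomputable abbrev unitUniform : Measure ℝ := volume.restrict (Icc 0 1)

instance : IsProbabilityMeasure unitUniform := ⟨by simp⟩

/-- The law of a family of independent phases uniform on `[0, 1]`. -/
noncomputable abbrev uniformPhases (ι : Type*) : Measure (ι → ℝ) :=
  Measure.infinitePi fun _ ↦ unitUniform

lemma IsUniformProductMeasure.eq_uniformPhases {μ : Measure (ℕ → ℝ)}
    (hμ : IsUniformProductMeasure μ) : μ = uniformPhases ℕ :=
  Measure.eq_infinitePi _ hμ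

section SineSeries

variable {ι : Type*} {a : ι → ℝ}

/-- The sine series `∑ aₙ sin (2πψₙ)` as a function of its phases. -/
noncomputable def sineSeries (a ψ : ι → ℝ) : ℝ := ∑' n, a n * Real.sin (2 * Real.pi * ψ n)

lemma norm_mul_sin_le (x y : ℝ) : ‖x * Real.sin y‖ ≤ |x| := by
  simpa [abs_mul] using mul_le_of_le_one_right (abs_nonneg x) (Real.abs_sin_le_one y)

lemma summable_mul_sin (ha : Summable fun n ↦ |a n|) (ψ : ι → ℝ) :
    Summable fun n ↦ a n * Real.sin (ψ n) :=
  .of_norm_bounded ha fun _ ↦ norm_mul_sin_le _ _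

lemma continuous_sineSeries (ha : Summable fun n ↦ |a n|) : Continuous (sineSeries a) :=
  continuous_tsum (fun _ ↦ by fun_prop) ha fun _ _ ↦ norm_mul_sin_le _ _

lemma sineSeries_sub (ha : Summable fun n ↦ |a n|) (ψ ψ' : ι → ℝ) :
    sineSeries a ψ - sineSeries a ψ' =
      sineSeries (fun n ↦ 2 * a n * Real.sin (Real.pi * (ψ n - ψ' n)))
        (fun n ↦ (ψ n + ψ' n) / 2 + 1 / 4) := by
  unfold sineSeries
  rw [← (summable_mul_sin ha _).tsum_sub (summable_mul_sin ha _)]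
  refine tsum_congr fun n ↦ ?_
  rw [← mul_sub, Real.sin_sub_sin, show 2 * Real.pi * ((ψ n + ψ' n) / 2 + 1 / 4)
    = (2 * Real.pi * ψ n + 2 * Real.pi * ψ' n) / 2 + Real.pi / 2 by ring, Real.sin_add_pi_div_two]
  ring_nf

lemma sineSeries_update [DecidableEq ι] (ha : Summable fun n ↦ |a n|) (ψ : ι → ℝ) (k : ι) (α : ℝ) :
    sineSeries a (Function.update ψ k α) = sineSeries a ψ - a k * Real.sin (2 * Real.pi * ψ k)
      + a k * Real.sin (2 * Real.pi * α) := by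
  have hterm : (fun n ↦ a n * Real.sin (2 * Real.pi * Function.update ψ k α n))
      = Function.update (fun n ↦ a n * Real.sin (2 * Real.pi * ψ n)) k
        (a k * Real.sin (2 * Real.pi * α)) := by
    ext n
    rcases eq_or_ne n k with rfl | hn <;> simp [*]
  rw [sineSeries, hterm, ((summable_mul_sin ha _).hasSum.update k _).tsum_eq, sineSeries]
  ring

lemma sineSeries_update_update_update [DecidableEq ι] (ha : Summable fun n ↦ |a n|) (ψ : ι → ℝ)
    {i j k : ι} (hij : i ≠ j) (hik : i ≠ k) (hjk : j ≠ k) :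
    ∃ c, ∀ α₁ α₂ α₃, sineSeries a
        (Function.update (Function.update (Function.update ψ i α₁) j α₂) k α₃)
      = c + a i * Real.sin (2 * Real.pi * α₁) + a j * Real.sin (2 * Real.pi * α₂)
        + a k * Real.sin (2 * Real.pi * α₃) := by
  refine ⟨sineSeries a ψ - a i * Real.sin (2 * Real.pi * ψ i)
    - a j * Real.sin (2 * Real.pi * ψ j) - a k * Real.sin (2 * Real.pi * ψ k), fun α₁ α₂ α₃ ↦ ?_⟩
  simp only [sineSeries_update ha, Function.update_of_ne hij.symm, Function.update_of_ne hik.symm,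
    Function.update_of_ne hjk.symm]
  ring

lemma lintegral_unitUniform_comp_sin_sin_sin (G : ℝ → ℝ → ℝ → ℝ≥0∞) (r₁ r₂ r₃ : ℝ) :
    ∫⁻ α₁, ∫⁻ α₂, ∫⁻ α₃, G (Real.sin (2 * Real.pi * (α₁ + r₁)))
        (Real.sin (2 * Real.pi * (α₂ + r₂))) (Real.sin (2 * Real.pi * (α₃ + r₃)))
        ∂unitUniform ∂unitUniform ∂unitUniform
      = ∫⁻ u, arcsineDensity u * ∫⁻ v, arcsineDensity v * ∫⁻ w, arcsineDensity w * G u v w := by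
  rw [← lintegral_comp_sin_two_pi_mul _ r₁]
  refine lintegral_congr fun α₁ ↦ ?_
  rw [← lintegral_comp_sin_two_pi_mul _ r₂]
  refine lintegral_congr fun α₂ ↦ ?_
  rw [← lintegral_comp_sin_two_pi_mul _ r₃]

/-- The constant in the smoothing estimate `lintegral_comp_sineSeries_le`: three times the squared
`L^{3/2}` mass of the arcsine density. -/
noncomputable def smoothingConst : ℝ≥0∞ := 3 * (∫⁻ u, arcsineDensity u ^ (3 / 2 : ℝ)) ^ 2

lemma smoothingConst_lt_top : smoothingConst < ∞ :=
  ENNReal.mul_lt_top (by simp)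
    (ENNReal.pow_lt_top (lintegral_arcsineDensity_rpow_lt_top (by norm_num) (by norm_num)))

lemma lintegral_comp_sineSeries_le [Countable ι] (ha : Summable fun n ↦ |a n|) (ρ : ι → ℝ)
    {s : Finset ι} (hs : s.card = 3) {δ : ℝ} (hδ : 0 < δ) (haδ : ∀ n ∈ s, δ ≤ |a n|)
    {g : ℝ → ℝ≥0∞} (hg : Measurable g) :
    ∫⁻ Θ, g (sineSeries a (Θ + ρ)) ∂uniformPhases ι
      ≤ smoothingConst * ENNReal.ofReal δ⁻¹ * ∫⁻ u, g u := by
  classical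
  obtain ⟨i, j, k, hij, hik, hjk, rfl⟩ := Finset.card_eq_three.1 hs
  have hF : Measurable fun Θ : ι → ℝ ↦ g (sineSeries a (Θ + ρ)) :=
    hg.comp ((continuous_sineSeries ha).measurable.comp (by fun_prop))
  have hupdate (Θ : ι → ℝ) (n : ι) (α : ℝ) :
      Function.update Θ n α + ρ = Function.update (Θ + ρ) n (α + ρ n) := by
    rw [Function.update_add, Function.update_eq_self]
  have hmarginal (Θ : ι → ℝ) :
      (∫⋯∫⁻_{i, j, k}, (fun Θ ↦ g (sineSeries a (Θ + ρ))) ∂fun _ ↦ unitUniform) Θ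
        ≤ smoothingConst * ENNReal.ofReal δ⁻¹ * ∫⁻ u, g u := by
    obtain ⟨c, hc⟩ := sineSeries_update_update_update ha (Θ + ρ) hij hik hjk
    have hi : i ∉ ({j, k} : Finset ι) := by simp [hij, hik]
    have hj : j ∉ ({k} : Finset ι) := by simp [hjk]
    simp only [lmarginal_insert _ hF hi, lmarginal_insert _ hF hj, lmarginal_singleton, hupdate, hc]
    rw [lintegral_unitUniform_comp_sin_sin_sin fun u v w ↦ g (c + a i * u + a j * v + a k * w)]
    refine (lintegral_mul_comp_affine_le measurable_arcsineDensity hg hδ c (haδ i (by simp))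
      (haδ j (by simp)) (haδ k (by simp))).trans_eq ?_
    rw [smoothingConst]
    ring
  rw [← lintegral_lmarginal_infinitePi _ {i, j, k} hF]
  exact (lintegral_mono hmarginal).trans_eq (by simp)

end SineSeries

section Weierstrass

variable {b β : ℝ}

/-- The random Weierstrass function `∑ b^{-βn} sin (2π(bⁿt + r + θₙ))` with a common phase shift
`r`: `r = 0` gives the sine coordinate `W2` and `r = 1/4` the cosine coordinate `W1`. -/
noncomputable def weierstrass (b β r : ℝ) (Θ : ℕ → ℝ) (t : ℝ) : ℝ :=
  sineSeries (fun n : ℕ ↦ b ^ (-β * (n : ℝ))) (fun n ↦ b ^ n * t + r + Θ n)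

lemma W1_eq_weierstrass (Θ : ℕ → ℝ) : W1 b β Θ = weierstrass b β (1 / 4) Θ := by
  ext t
  refine tsum_congr fun n ↦ ?_
  rw [show 2 * Real.pi * (b ^ n * t + 1 / 4 + Θ n) = 2 * Real.pi * (b ^ n * t + Θ n) + Real.pi / 2
    by ring, Real.sin_add_pi_div_two]

lemma W2_eq_weierstrass (Θ : ℕ → ℝ) : W2 b β Θ = weierstrass b β 0 Θ := by
  unfold W2 weierstrass sineSeries
  simp only [add_zero]

lemma summable_abs_rpow_neg_mul (hb : 1 < b) (hβ : 0 < β) :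
    Summable fun n : ℕ ↦ |b ^ (-β * (n : ℝ))| := by
  have hb₀ : 0 ≤ b := by linarith
  simp only [Real.rpow_mul hb₀, Real.rpow_natCast, abs_of_nonneg (pow_nonneg
    (Real.rpow_nonneg hb₀ (-β)) _)]
  exact summable_geometric_of_lt_one (by positivity)
    (Real.rpow_lt_one_of_one_lt_of_neg hb (by linarith))

lemma measurable_weierstrass {Ω : Type*} [MeasurableSpace Ω] {Θ : Ω → ℕ → ℝ} {t : Ω → ℝ}
    (hb : 1 < b) (hβ : 0 < β) (r : ℝ) (hΘ : Measurable Θ) (ht : Measurable t) :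
    Measurable fun ω ↦ weierstrass b β r (Θ ω) (t ω) :=
  (continuous_sineSeries (summable_abs_rpow_neg_mul hb hβ)).measurable.comp (by fun_prop)

/-- The amplitudes of the sine series representing an increment of a Weierstrass function over a
displacement `h`. -/
noncomputable def incrementAmplitude (b β h : ℝ) (n : ℕ) : ℝ :=
  2 * b ^ (-β * (n : ℝ)) * Real.sin (Real.pi * (b ^ n * h))

lemma weierstrass_sub (hb : 1 < b) (hβ : 0 < β) (r : ℝ) (Θ : ℕ → ℝ) (x y : ℝ) :
    weierstrass b β r Θ x - weierstrass b β r Θ y = sineSeries (incrementAmplitude b β (x - y))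
      (Θ + fun n ↦ b ^ n * (x + y) / 2 + r + 1 / 4) := by
  rw [weierstrass, weierstrass, sineSeries_sub (summable_abs_rpow_neg_mul hb hβ)]
  congr 1 <;> ext n
  · rw [incrementAmplitude]; ring_nf
  · rw [Pi.add_apply]; ring

lemma summable_abs_incrementAmplitude (hb : 1 < b) (hβ : 0 < β) (h : ℝ) :
    Summable fun n ↦ |incrementAmplitude b β h n| := by
  refine .of_nonneg_of_le (fun _ ↦ abs_nonneg _) (fun n ↦ norm_mul_sin_le _ _) ?_
  simpa only [abs_mul] using (summable_abs_rpow_neg_mul hb hβ).mul_left |2|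

lemma exists_forall_pow_mul_mem_Icc (hb : 1 < b) {h : ℝ} (hh : 0 < h) (hsmall : 2 * b ^ 2 * h ≤ 1) :
    ∃ k, ∀ n ∈ Finset.Icc k (k + 2), b ^ n * h ∈ Icc (1 / (2 * b ^ 3)) (1 / 2) := by
  have : 0 < b := by linarith
  obtain ⟨k, hk, hk'⟩ := exists_nat_pow_near (one_le_one_div (by positivity) hsmall) hb
  rw [le_div_iff₀ (by positivity)] at hk
  rw [div_lt_iff₀ (by positivity)] at hk'
  refine ⟨k, fun n hn ↦ ?_⟩
  obtain ⟨hkn, hnk⟩ := Finset.mem_Icc.1 hn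
  constructor
  · calc 1 / (2 * b ^ 3) ≤ b ^ k * h := by
          rw [div_le_iff₀ (by positivity)]
          calc 1 ≤ b ^ (k + 1) * (2 * b ^ 2 * h) := hk'.le
            _ = b ^ k * h * (2 * b ^ 3) := by ring
      _ ≤ b ^ n * h := by gcongr; exact hb.le
  · calc b ^ n * h ≤ b ^ (k + 2) * h := by gcongr; exact hb.le
      _ = b ^ k * (2 * b ^ 2 * h) / 2 := by ring
      _ ≤ 1 / 2 := by gcongr

lemma le_abs_incrementAmplitude (hb : 1 < b) (hβ : 0 < β) {h : ℝ} (hh : h ≠ 0) {n : ℕ}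
    (hn : b ^ n * |h| ∈ Icc (1 / (2 * b ^ 3)) (1 / 2)) :
    2 / b ^ 3 * |h| ^ β ≤ |incrementAmplitude b β h n| := by
  have hb₀ : 0 < b := by linarith
  have hpi := Real.pi_pos
  have habs : |Real.pi * (b ^ n * h)| = Real.pi * (b ^ n * |h|) := by
    rw [abs_mul, abs_mul, abs_of_pos hpi, abs_of_pos (pow_pos hb₀ n)]
  have hsin : 1 / b ^ 3 ≤ |Real.sin (Real.pi * (b ^ n * h))| :=
    calc 1 / b ^ 3 = 2 * (1 / (2 * b ^ 3)) := by field_simp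
      _ ≤ 2 * (b ^ n * |h|) := by gcongr; exact hn.1
      _ = 2 / Real.pi * |Real.pi * (b ^ n * h)| := by rw [habs]; field_simp
      _ ≤ _ := Real.mul_abs_le_abs_sin (by rw [habs]; nlinarith [hn.2])
  have hpow : |h| ^ β ≤ b ^ (-β * (n : ℝ)) :=
    calc |h| ^ β ≤ ((b ^ n)⁻¹) ^ β := by
          gcongr
          rw [le_inv_comm₀ (abs_pos.2 hh) (by positivity), ← one_div, le_div_iff₀ (abs_pos.2 hh)]
          linarith [hn.2]
      _ = b ^ (-β * (n : ℝ)) := by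
          rw [← Real.rpow_natCast, ← Real.rpow_neg hb₀.le, ← Real.rpow_mul hb₀.le]
          ring_nf
  calc 2 / b ^ 3 * |h| ^ β = 2 * |h| ^ β * (1 / b ^ 3) := by ring
    _ ≤ 2 * b ^ (-β * (n : ℝ)) * |Real.sin (Real.pi * (b ^ n * h))| := by gcongr
    _ = |incrementAmplitude b β h n| := by
        rw [incrementAmplitude, abs_mul, abs_of_pos (a := 2 * _) (by positivity)]

lemma lintegral_comp_weierstrass_sub_le (hb : 1 < b) (hβ : 0 < β) (r : ℝ) {x y : ℝ} (hxy : x ≠ y)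
    (hsmall : 2 * b ^ 2 * |x - y| ≤ 1) {g : ℝ → ℝ≥0∞} (hg : Measurable g) :
    ∫⁻ Θ, g (weierstrass b β r Θ x - weierstrass b β r Θ y) ∂uniformPhases ℕ
      ≤ smoothingConst * ENNReal.ofReal (b ^ 3 / 2 * |x - y| ^ (-β)) * ∫⁻ u, g u := by
  have : 0 < b := by linarith
  have hpos : 0 < |x - y| := abs_pos.2 (sub_ne_zero.2 hxy)
  obtain ⟨k, hk⟩ := exists_forall_pow_mul_mem_Icc hb hpos hsmall
  have hcard : (Finset.Icc k (k + 2)).card = 3 := by rw [Nat.card_Icc]; omega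
  simp only [weierstrass_sub hb hβ]
  refine (lintegral_comp_sineSeries_le (summable_abs_incrementAmplitude hb hβ _) _ hcard
    (δ := 2 / b ^ 3 * |x - y| ^ β) (by positivity)
    (fun n hn ↦ le_abs_incrementAmplitude hb hβ (sub_ne_zero.2 hxy) (hk n hn)) hg).trans_eq ?_
  rw [mul_inv, inv_div, ← Real.rpow_neg hpos.le]

end Weierstrass

section RieszKernel

variable {s h : ℝ}

/-- The square root of the Riesz kernel of order `s` on `ℝ²` at `(h, u)`: the Riesz kernel of order
`s` on `ℝ³` at `(h, u, v)` is at most the product of the factors at `u` and at `v`. -/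
noncomputable def rieszFactor (s h u : ℝ) : ℝ≥0∞ := ENNReal.ofReal ((h ^ 2 + u ^ 2) ^ (-(s / 4)))

@[fun_prop]
lemma measurable_rieszFactor (s h : ℝ) : Measurable (rieszFactor s h) := by
  unfold rieszFactor; fun_prop

lemma ofReal_rpow_le_rieszFactor_mul (hs : 0 ≤ s) (hh : h ≠ 0) (u v : ℝ) :
    ENNReal.ofReal ((h ^ 2 + (u ^ 2 + v ^ 2)) ^ (-(s / 2)))
      ≤ rieszFactor s h u * rieszFactor s h v := by
  have hprod : (h ^ 2 + u ^ 2) * (h ^ 2 + v ^ 2) ≤ (h ^ 2 + (u ^ 2 + v ^ 2)) ^ 2 := by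
    have h₁ : h ^ 2 + u ^ 2 ≤ h ^ 2 + (u ^ 2 + v ^ 2) := by nlinarith
    have h₂ : h ^ 2 + v ^ 2 ≤ h ^ 2 + (u ^ 2 + v ^ 2) := by nlinarith
    rw [sq (h ^ 2 + _)]
    gcongr
  rw [rieszFactor, rieszFactor, ← ENNReal.ofReal_mul (by positivity),
    ← Real.mul_rpow (by positivity) (by positivity)]
  gcongr
  calc (h ^ 2 + (u ^ 2 + v ^ 2)) ^ (-(s / 2))
      = ((h ^ 2 + (u ^ 2 + v ^ 2)) ^ 2) ^ (-(s / 4)) := by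
        rw [← Real.rpow_natCast_mul (by positivity)]; ring_nf
    _ ≤ ((h ^ 2 + u ^ 2) * (h ^ 2 + v ^ 2)) ^ (-(s / 4)) :=
        Real.rpow_le_rpow_of_nonpos (by positivity) hprod (by linarith)

lemma lintegral_rieszFactor_one_lt_top (hs : 2 < s) : ∫⁻ u, rieszFactor s 1 u < ∞ := by
  have h := (integrable_rpow_neg_one_add_norm_sq (E := ℝ) (μ := volume) (r := s / 2)
    (by simpa using (by linarith : 1 < s / 2))).lintegral_lt_top
  refine (lintegral_congr fun u ↦ ?_).trans_lt h
  rw [rieszFactor, Real.norm_eq_abs, sq_abs, one_pow]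
  ring_nf

lemma rieszFactor_abs_mul (s h u : ℝ) :
    rieszFactor s h (|h| * u) = ENNReal.ofReal (|h| ^ (-(s / 2))) * rieszFactor s 1 u := by
  rw [rieszFactor, rieszFactor, ← ENNReal.ofReal_mul (by positivity),
    show h ^ 2 + (|h| * u) ^ 2 = |h| ^ 2 * (1 ^ 2 + u ^ 2) by rw [mul_pow, sq_abs]; ring,
    Real.mul_rpow (by positivity) (by positivity), ← Real.rpow_natCast_mul (abs_nonneg h)]
  ring_nf

lemma lintegral_rieszFactor (s : ℝ) (hh : h ≠ 0) :
    ∫⁻ u, rieszFactor s h u = ENNReal.ofReal (|h| ^ (1 - s / 2)) * ∫⁻ u, rieszFactor s 1 u := by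
  have hpos : 0 < |h| := abs_pos.2 hh
  have hscale := lintegral_comp_const_add_mul (rieszFactor s h) 0 hpos.ne'
  simp only [zero_add, rieszFactor_abs_mul] at hscale
  rw [lintegral_const_mul _ (by fun_prop), abs_inv, abs_abs] at hscale
  calc ∫⁻ u, rieszFactor s h u
      = ENNReal.ofReal |h| * (ENNReal.ofReal |h|⁻¹ * ∫⁻ u, rieszFactor s h u) := by
        rw [← mul_assoc, ← ENNReal.ofReal_mul hpos.le, mul_inv_cancel₀ hpos.ne', ENNReal.ofReal_one,
          one_mul]
    _ = ENNReal.ofReal (|h| ^ (1 - s / 2)) * ∫⁻ u, rieszFactor s 1 u := by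
        rw [← hscale, ← mul_assoc, ← ENNReal.ofReal_mul hpos.le, sub_eq_add_neg,
          Real.rpow_add hpos, Real.rpow_one]

end RieszKernel

section Energy

variable {b β s : ℝ}

/-- The integrand `|(x, f x) - (y, f y)| ^ (-s)` of the `s`-energy of the graph of
`f = f_{Θ,Λ}`, with `p = (Θ, Λ)`. -/
noncomputable def energyKernel (b β s : ℝ) (p : (ℕ → ℝ) × (ℕ → ℝ)) (x y : ℝ) : ℝ≥0∞ :=
  ENNReal.ofReal (((x - y) ^ 2 + Wdist b β p.1 p.2 x y ^ 2) ^ (-(s / 2)))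

lemma energyKernel_eq (p : (ℕ → ℝ) × (ℕ → ℝ)) (x y : ℝ) :
    energyKernel b β s p x y = ENNReal.ofReal (((x - y) ^ 2
      + ((weierstrass b β (1 / 4) p.1 x - weierstrass b β (1 / 4) p.1 y) ^ 2
        + (weierstrass b β 0 p.2 x - weierstrass b β 0 p.2 y) ^ 2)) ^ (-(s / 2))) := by
  rw [energyKernel, Wdist, Real.sq_sqrt (by positivity), W1_eq_weierstrass, W2_eq_weierstrass]

lemma measurable_energyKernel (hb : 1 < b) (hβ : 0 < β) :
    Measurable fun q : ((ℕ → ℝ) × (ℕ → ℝ)) × ℝ × ℝ ↦ energyKernel b β s q.1 q.2.1 q.2.2 := by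
  have hx {i : (ℕ → ℝ) × (ℕ → ℝ) → ℕ → ℝ} (hi : Measurable i) (r : ℝ) :
      Measurable fun q : ((ℕ → ℝ) × (ℕ → ℝ)) × ℝ × ℝ ↦
        weierstrass b β r (i q.1) q.2.1 - weierstrass b β r (i q.1) q.2.2 :=
    (measurable_weierstrass hb hβ r (by fun_prop) (by fun_prop)).sub
      (measurable_weierstrass hb hβ r (by fun_prop) (by fun_prop))
  have := hx measurable_fst (1 / 4)
  have := hx measurable_snd 0
  simp only [energyKernel_eq]
  fun_prop

lemma lintegral_energyKernel_le_of_small (hb : 1 < b) (hβ : 0 < β) (hs : 0 ≤ s) {x y : ℝ}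
    (hxy : x ≠ y) (hsmall : 2 * b ^ 2 * |x - y| ≤ 1) :
    ∫⁻ p, energyKernel b β s p x y ∂(uniformPhases ℕ).prod (uniformPhases ℕ)
      ≤ (smoothingConst * ENNReal.ofReal (b ^ 3 / 2) * ∫⁻ u, rieszFactor s 1 u) ^ 2
        * ENNReal.ofReal (|x - y| ^ (2 - s - 2 * β)) := by
  have : 0 < b := by linarith
  have hxy' := sub_ne_zero.2 hxy
  have hpos : 0 < |x - y| := abs_pos.2 hxy'
  set Δ : ℝ → (ℕ → ℝ) → ℝ := fun r Θ ↦ weierstrass b β r Θ x - weierstrass b β r Θ y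
  have hΔ (r : ℝ) : Measurable (Δ r) :=
    (measurable_weierstrass hb hβ r measurable_id measurable_const).sub
      (measurable_weierstrass hb hβ r measurable_id measurable_const)
  have hcoord (r : ℝ) : ∫⁻ Θ, rieszFactor s (x - y) (Δ r Θ) ∂uniformPhases ℕ
      ≤ smoothingConst * ENNReal.ofReal (b ^ 3 / 2) * (∫⁻ u, rieszFactor s 1 u)
        * ENNReal.ofReal (|x - y| ^ (1 - s / 2 - β)) := by
    refine (lintegral_comp_weierstrass_sub_le hb hβ r hxy hsmall (by fun_prop)).trans_eq ?_
    rw [lintegral_rieszFactor s hxy', sub_eq_add_neg (1 - s / 2), Real.rpow_add hpos,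
      ENNReal.ofReal_mul (by positivity), ENNReal.ofReal_mul (by positivity)]
    ring
  calc ∫⁻ p, energyKernel b β s p x y ∂(uniformPhases ℕ).prod (uniformPhases ℕ)
      ≤ ∫⁻ p, rieszFactor s (x - y) (Δ (1 / 4) p.1) * rieszFactor s (x - y) (Δ 0 p.2)
          ∂(uniformPhases ℕ).prod (uniformPhases ℕ) := by
        gcongr with p
        rw [energyKernel_eq]
        exact ofReal_rpow_le_rieszFactor_mul hs hxy' _ _
    _ = (∫⁻ Θ, rieszFactor s (x - y) (Δ (1 / 4) Θ) ∂uniformPhases ℕ)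
          * ∫⁻ Λ, rieszFactor s (x - y) (Δ 0 Λ) ∂uniformPhases ℕ :=
        lintegral_prod_mul (f := fun Θ ↦ rieszFactor s (x - y) (Δ (1 / 4) Θ))
          (g := fun Λ ↦ rieszFactor s (x - y) (Δ 0 Λ)) (by fun_prop) (by fun_prop)
    _ ≤ _ := mul_le_mul' (hcoord _) (hcoord _)
    _ = _ := by
        rw [mul_mul_mul_comm, ← sq, ← ENNReal.ofReal_mul (by positivity), ← Real.rpow_add hpos]
        ring_nf

lemma energyKernel_le_of_large (hb : 0 < b) (hs : 0 ≤ s) (p : (ℕ → ℝ) × (ℕ → ℝ)) {x y : ℝ}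
    (hlarge : 1 ≤ 2 * b ^ 2 * |x - y|) :
    energyKernel b β s p x y ≤ ENNReal.ofReal ((2 * b ^ 2) ^ s) := by
  have hdist : (2 * b ^ 2)⁻¹ ≤ |x - y| := by
    rwa [inv_le_iff_one_le_mul₀' (by positivity)]
  unfold energyKernel
  gcongr
  calc ((x - y) ^ 2 + Wdist b β p.1 p.2 x y ^ 2) ^ (-(s / 2))
      ≤ ((2 * b ^ 2)⁻¹ ^ 2) ^ (-(s / 2)) := by
        refine Real.rpow_le_rpow_of_nonpos (by positivity) ?_ (by linarith)
        calc (2 * b ^ 2)⁻¹ ^ 2 ≤ |x - y| ^ 2 := by gcongr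
          _ ≤ _ := by rw [sq_abs]; exact le_add_of_nonneg_right (sq_nonneg _)
    _ = (2 * b ^ 2) ^ s := by
        rw [← Real.rpow_natCast_mul (by positivity), Real.inv_rpow (by positivity),
          ← Real.rpow_neg (by positivity)]
        ring_nf

lemma exists_lintegral_energyKernel_le (hb : 1 < b) (hβ : 0 < β) (hs : 2 < s) :
    ∃ C < ∞, ∀ x y, x ≠ y →
      ∫⁻ p, energyKernel b β s p x y ∂(uniformPhases ℕ).prod (uniformPhases ℕ)
        ≤ C * ENNReal.ofReal (|x - y| ^ (2 - s - 2 * β)) + C := by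
  set C₁ := (smoothingConst * ENNReal.ofReal (b ^ 3 / 2) * ∫⁻ u, rieszFactor s 1 u) ^ 2
  set C₂ := ENNReal.ofReal ((2 * b ^ 2) ^ s)
  have hC₁ : C₁ < ∞ := ENNReal.pow_lt_top (ENNReal.mul_lt_top
    (ENNReal.mul_lt_top smoothingConst_lt_top ofReal_lt_top) (lintegral_rieszFactor_one_lt_top hs))
  refine ⟨C₁ + C₂, ENNReal.add_lt_top.2 ⟨hC₁, ofReal_lt_top⟩, fun x y hxy ↦ ?_⟩
  rcases le_total (2 * b ^ 2 * |x - y|) 1 with hsmall | hlarge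
  · refine (lintegral_energyKernel_le_of_small hb hβ (by linarith) hxy hsmall).trans ?_
    exact le_add_right (by gcongr; exact le_self_add)
  · calc _ ≤ ∫⁻ _, C₂ ∂(uniformPhases ℕ).prod (uniformPhases ℕ) :=
          lintegral_mono fun p ↦ energyKernel_le_of_large (by linarith) (by linarith) p hlarge
      _ = C₂ := by simp
      _ ≤ _ := le_add_left le_add_self

lemma lintegral_lintegral_lintegral_energyKernel_lt_top (hb : 1 < b) (hβ : 0 < β) (hs : 2 < s)
    (hs' : s < 3 - 2 * β) :
    ∫⁻ x in Icc (0 : ℝ) 1, ∫⁻ y in Icc (0 : ℝ) 1,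
      ∫⁻ p, energyKernel b β s p x y ∂(uniformPhases ℕ).prod (uniformPhases ℕ) < ∞ := by
  obtain ⟨C, hC, hle⟩ := exists_lintegral_energyKernel_le hb hβ hs
  calc _ ≤ ∫⁻ x in Icc (0 : ℝ) 1, ∫⁻ y in Icc (0 : ℝ) 1,
          (C * ENNReal.ofReal (|x - y| ^ (2 - s - 2 * β)) + C) := by
        refine lintegral_mono fun x ↦ lintegral_mono_ae (ae_restrict_of_ae ?_)
        filter_upwards [Measure.ae_ne volume x] with y hy using hle x y hy.symm
    _ = C * (∫⁻ x in Icc (0 : ℝ) 1, ∫⁻ y in Icc (0 : ℝ) 1,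
          ENNReal.ofReal (|x - y| ^ (2 - s - 2 * β))) + C := by
        simp (disch := with_unfolding_all fun_prop) only [lintegral_add_right, lintegral_const_mul,
          lintegral_const, measure_univ, mul_one]
    _ < ∞ := ENNReal.add_lt_top.2 ⟨ENNReal.mul_lt_top hC
        (lintegral_lintegral_abs_sub_rpow_lt_top (by linarith)), hC⟩

end Energy

/-- for `s ∈ (2, 3-2β)`, the expectation over `(Θ,Λ)` of the `s`-energy
`I_s(μ_{Θ,Λ}) = ∫₀¹∫₀¹ ((x-y)² + |f(x)-f(y)|²)^{-s/2} dx dy` is finite. -/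
theorem stmt_6 (b β s : ℝ) (hb : 1 < b) (hβ : β ∈ Set.Ioo (0 : ℝ) (1 / 2))
    (hs : s ∈ Set.Ioo (2 : ℝ) (3 - 2 * β))
    (μ : Measure (ℕ → ℝ)) (hμ : IsUniformProductMeasure μ) :
    (∫⁻ p, (∫⁻ x in Set.Icc (0 : ℝ) 1, ∫⁻ y in Set.Icc (0 : ℝ) 1,
        ENNReal.ofReal
          (((x - y) ^ 2 + (Wdist b β p.1 p.2 x y) ^ 2) ^ (-(s / 2)))) ∂ μ.prod μ)
      < ⊤ := by
  obtain rfl := hμ.eq_uniformPhases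
  have hmeas := measurable_energyKernel (s := s) hb hβ.1
  calc ∫⁻ p, (∫⁻ x in Icc (0 : ℝ) 1, ∫⁻ y in Icc (0 : ℝ) 1, energyKernel b β s p x y)
        ∂(uniformPhases ℕ).prod (uniformPhases ℕ)
      = ∫⁻ x in Icc (0 : ℝ) 1, (∫⁻ p, (∫⁻ y in Icc (0 : ℝ) 1, energyKernel b β s p x y)
          ∂(uniformPhases ℕ).prod (uniformPhases ℕ)) :=
        lintegral_lintegral_swap (by fun_prop)
    _ = ∫⁻ x in Icc (0 : ℝ) 1, ∫⁻ y in Icc (0 : ℝ) 1, ∫⁻ p, energyKernel b β s p x y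
          ∂(uniformPhases ℕ).prod (uniformPhases ℕ) :=
        lintegral_congr fun x ↦ lintegral_lintegral_swap (by fun_prop)
    _ < ⊤ := lintegral_lintegral_lintegral_energyKernel_lt_top hb hβ.1 hs.1 hs.2
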